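/- Let X = X_{a,b} be the Bourgain–Delbaen space, Q : ℓ∞^* → X^* the restriction map, and C the weak*-closure of {Q e_k^* : k ∈ ℕ} in X^*. Then for every ε > 0 the modified ε-Szlenk index η(ε, C) is finite; that is, there is n < ω with P_n(ε, C) = ∅. -/

import Mathlib

open MeasureTheory Set Ordinal Filter
open scoped Classical

/-- `ℓ∞ = ℓ∞(ℕ)`. -/
noncomputable abbrev linf : Type := lp (fun _ : ℕ => ℝ) ⊤

/-- The `k`-th coordinate functional `e_k^*` on `ℓ∞`. -/
noncomputable def coordFn (k : ℕ) : linf →L[ℝ] ℝ :=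
  LinearMap.mkContinuous
    { toFun := fun x => x k
      map_add' := fun _ _ => rfl
      map_smul' := fun _ _ => rfl }
    1 (fun x => by
      rw [one_mul]
      exact lp.norm_apply_le_norm (E := fun _ : ℕ => ℝ) ENNReal.top_ne_zero x k)

/-- The `k`-th coordinate vector `e_k` of `ℓ∞`. -/
noncomputable def ek (k : ℕ) : linf := lp.single ⊤ k (1 : ℝ)

/-- `E_n = span{e_k : 1 ≤ k ≤ d n}`. -/
noncomputable def Esub (d : ℕ → ℕ) (n : ℕ) : Submodule ℝ linf :=
  Submodule.span ℝ {x : linf | ∃ k : ℕ, 1 ≤ k ∧ k ≤ d n ∧ x = ek k}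

/-- All the data of the Bourgain–Delbaen construction: the constants `a`, `b`, `λ`, the
dimensions `d n`, the enumeration `φ` of tuples `(σ',i,m,σ'',j)`, the coordinate projections
`π_m`, the embeddings `i_{m,n}` and the limit projections `P_m`, together with their defining
properties. -/
structure BDSetup where
  a : ℝ
  b : ℝ
  lam : ℝ
  hb : 0 < b
  hba : b < a
  ha : a < 1
  hlam : 1 < lam
  hineq : a + 2 * b * lam < lam
  /-- the dimensions -/
  d : ℕ → ℕ
  hd1 : d 1 = 1
  hd2 : d 2 = 2
  /-- the enumeration of the tuples `(σ', i, m, σ'', j)` -/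
  φ : ℕ → ℤ × ℕ × ℕ × ℤ × ℕ
  hφ : ∀ n : ℕ, 2 ≤ n → Set.BijOn φ {k : ℕ | d n < k ∧ k ≤ d (n + 1)}
      {q : ℤ × ℕ × ℕ × ℤ × ℕ | (q.1 = 1 ∨ q.1 = -1) ∧ (q.2.2.2.1 = 1 ∨ q.2.2.2.1 = -1) ∧
        1 ≤ q.2.2.1 ∧ q.2.2.1 < n ∧ 1 ≤ q.2.1 ∧ q.2.1 ≤ d q.2.2.1 ∧
        1 ≤ q.2.2.2.2 ∧ q.2.2.2.2 ≤ d n}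
  /-- the coordinate projections `π_m` -/
  pi : ℕ → (linf →L[ℝ] linf)
  hpi : ∀ (m : ℕ) (x : linf) (k : ℕ), pi m x k = if 1 ≤ k ∧ k ≤ d m then x k else 0
  /-- the embeddings `i_{m,n}` -/
  iMap : ℕ → ℕ → (linf →L[ℝ] linf)
  hi12 : ∀ x : linf, x ∈ Esub d 1 → iMap 1 2 x = x
  histep : ∀ n : ℕ, 2 ≤ n → ∀ x : linf, x ∈ Esub d n →
    iMap n (n + 1) x = x + ∑ k ∈ Finset.Ioc (d n) (d (n + 1)),
      (a * ((φ k).1 : ℝ) * x (φ k).2.1 +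
        b * (((φ k).2.2.2.1 : ℤ) : ℝ) *
          ((x - iMap (φ k).2.2.1 n (pi (φ k).2.2.1 x)) (φ k).2.2.2.2)) • ek k
  hicomp : ∀ m n : ℕ, 1 ≤ m → m < n → ∀ x : linf, x ∈ Esub d m →
    iMap m (n + 1) x = iMap n (n + 1) (iMap m n x)
  hinorm : ∀ m n : ℕ, 1 ≤ m → m < n → ∀ x : linf, x ∈ Esub d m → ‖iMap m n x‖ ≤ lam * ‖x‖
  /-- the coordinatewise limit projections `P_m` -/
  P : ℕ → (linf →L[ℝ] linf)
  hP0 : P 0 = 0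
  hPlim : ∀ m : ℕ, 1 ≤ m → ∀ (x : linf) (k : ℕ),
    Filter.Tendsto (fun n => (iMap m n (pi m x)) k) Filter.atTop (nhds (P m x k))
  hPproj : ∀ m : ℕ, (P m).comp (P m) = P m
  hPnorm : ∀ m : ℕ, ‖P m‖ ≤ lam

/-- The Bourgain–Delbaen space `X = X_{a,b}`, the closed linear span of `⋃ m, P_m(E_m)`. -/
noncomputable def Xsub (S : BDSetup) : Submodule ℝ linf :=
  (Submodule.span ℝ (⋃ m ∈ {m : ℕ | 1 ≤ m}, (S.P m) '' (Esub S.d m))).topologicalClosure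

/-- The restriction (quotient) map `Q : ℓ∞^* → X^*`. -/
noncomputable def QMap (S : BDSetup) (f : linf →L[ℝ] ℝ) : (Xsub S) →L[ℝ] ℝ :=
  f.comp (Xsub S).subtypeL

/-- The images `Q e_k^*` of the coordinate functionals in `X^*`. -/
noncomputable def Qe (S : BDSetup) (k : ℕ) : (Xsub S) →L[ℝ] ℝ := QMap S (coordFn k)

/-- The modified Szlenk sets `P_α(ε, B)` of a subset `B` of the dual of `Y`: at successor
steps one takes weak* limits of `ε`-norm-separated sequences in the previous set, and
intersections at limit steps. -/
noncomputable def PmodSet (Y : Type*) [NormedAddCommGroup Y] [NormedSpace ℝ Y]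
    (ε : ℝ) (B : Set (Y →L[ℝ] ℝ)) : Ordinal → Set (Y →L[ℝ] ℝ) :=
  fun α => Ordinal.limitRecOn α B
    (fun _ prev => {f | f ∈ B ∧ ∃ bs : ℕ → Y →L[ℝ] ℝ,
      (∀ n, bs n ∈ prev) ∧
      (∀ y : Y, Filter.Tendsto (fun n => bs n y) Filter.atTop (nhds (f y))) ∧
      (∀ n m : ℕ, n ≠ m → ε ≤ ‖bs n - bs m‖)})
    (fun β _ ih => ⋂ (γ : Ordinal) (h : γ < β), ih γ h)

/-- The weak*-closure of a set of functionals. -/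
def wstarCl {Y : Type*} [NormedAddCommGroup Y] [NormedSpace ℝ Y]
    (B : Set (Y →L[ℝ] ℝ)) : Set (Y →L[ℝ] ℝ) :=
  {f | ∀ (s : Finset Y) (δ : ℝ), 0 < δ → ∃ g ∈ B, ∀ y ∈ s, |g y - f y| < δ}

/-!
A weak*-limit of an `ε`-separated sequence in `C` is a cluster point of `C` along the filter
`escape r`, `r < ε / 2`, generated by the complements of norm balls of radius `r`. This notion of
derivation commutes with finite unions and turns level `r` into level `r / |c|` under
`f ↦ v + c • f`.

For `d n < k ≤ d (n + 1)` and `φ k = (σ', i, m, σ'', j)`,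
`Q e_k^* = a σ' Q e_i^* + b σ'' Q e_j^* ∘ (I - P_m) + Q e_k^* ∘ (I - P_n)`,
where the last term tends to zero weak*. Hence one derivation takes `C` into the union of the
dilates `± a • C` and of the pieces `a σ' Q e_i^* + b σ'' • (C ∘ (I - P_m))`; finitely many pieces
belong to each `m`, and they shrink to points of the dilates as `m → ∞`. The operators `I - P_m`
form a monoid bounded by `1 + λ`, so the same holds for each `C ∘ (I - P_m)`. If `n` derivations at
level `r / a` annihilate all these sets, then `n + 1` derivations at level `r` leave only the
dilates of each of them, and `n` more leave nothing. Iterating this, the level `r / a ^ N`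
eventually exceeds `1 + λ`, where a single derivation is enough.
-/

open scoped Pointwise Topology

section ClusterSet

variable {X : Type*} [TopologicalSpace X] {F F' : Filter X} {A B : Set X}

/-- The derived set of `A` along the filter `F`: the points all of whose neighbourhoods meet `A`
in a set that is not `F`-negligible (its complement is not in `F`). For `F = cofinite` these are
the `ω`-accumulation points of `A`. -/
def clusterSet (F : Filter X) (A : Set X) : Set X :=
  {x | ClusterPt x (F ⊓ 𝓟 A)}

theorem mem_clusterSet {x : X} : x ∈ clusterSet F A ↔ ClusterPt x (F ⊓ 𝓟 A) := Iff.rfl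

theorem clusterSet_top : clusterSet ⊤ A = closure A := by
  ext x
  rw [mem_clusterSet, top_inf_eq, mem_closure_iff_clusterPt]

theorem clusterSet_mono (hF : F ≤ F') (hA : A ⊆ B) : clusterSet F A ⊆ clusterSet F' B :=
  fun _ hx => hx.mono (inf_le_inf hF (principal_mono.2 hA))

theorem clusterSet_iterate_mono (hF : F ≤ F') (hA : A ⊆ B) (n : ℕ) :
    (clusterSet F)^[n] A ⊆ (clusterSet F')^[n] B := by
  induction n with
  | zero => exact hA
  | succ n ih =>
    simp only [Function.iterate_succ_apply']
    exact clusterSet_mono hF ih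

theorem clusterSet_subset (hA : IsClosed A) : clusterSet F A ⊆ A :=
  fun _ hx => hA.closure_subset (mem_closure_iff_clusterPt.2 (hx.mono inf_le_right))

theorem clusterSet_iterate_subset (hA : IsClosed A) (n : ℕ) : (clusterSet F)^[n] A ⊆ A := by
  induction n with
  | zero => exact subset_rfl
  | succ n ih =>
    rw [Function.iterate_succ_apply']
    exact (clusterSet_mono le_rfl ih).trans (clusterSet_subset hA)

theorem clusterSet_union : clusterSet F (A ∪ B) = clusterSet F A ∪ clusterSet F B := by
  ext x
  simp only [mem_clusterSet, mem_union, ← sup_principal, inf_sup_left, clusterPt_sup]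

theorem clusterSet_iterate_union (n : ℕ) :
    (clusterSet F)^[n] (A ∪ B) = (clusterSet F)^[n] A ∪ (clusterSet F)^[n] B := by
  induction n with
  | zero => rfl
  | succ n ih => simp only [Function.iterate_succ_apply', ih, clusterSet_union]

theorem clusterSet_eq_empty (hA : Aᶜ ∈ F) : clusterSet F A = ∅ := by
  refine eq_empty_of_forall_notMem fun x hx => ?_
  rw [mem_clusterSet, inf_principal_eq_bot.2 hA, ClusterPt, inf_bot_eq] at hx
  exact hx.ne rfl

theorem clusterSet_biUnion_finite {ι : Type*} {s : Set ι} (hs : s.Finite) (A : ι → Set X) :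
    clusterSet F (⋃ i ∈ s, A i) = ⋃ i ∈ s, clusterSet F (A i) := by
  induction s, hs using Set.Finite.induction_on with
  | empty => simpa using clusterSet_eq_empty (F := F) (A := ∅) (by simp)
  | insert _ _ ih => rw [biUnion_insert, biUnion_insert, clusterSet_union, ih]

theorem mem_clusterSet_inter_nhds {x : X} {V : Set X} (hV : V ∈ 𝓝 x) :
    x ∈ clusterSet F (A ∩ V) ↔ x ∈ clusterSet F A := by
  simp only [mem_clusterSet, ClusterPt, ← inf_principal]
  rw [inf_comm (𝓟 A), ← inf_assoc, ← inf_assoc, ← inf_assoc, inf_right_comm _ F,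
    inf_eq_left.2 (le_principal_iff.2 hV)]

variable {Z : Type*} [TopologicalSpace Z]

theorem clusterSet_image (φ : X ≃ₜ Z) (F : Filter Z) (A : Set X) :
    clusterSet F (φ '' A) = φ '' clusterSet (F.comap φ) A := by
  ext z
  obtain ⟨x, rfl⟩ := φ.surjective z
  rw [φ.injective.mem_set_image, mem_clusterSet, mem_clusterSet, ← map_principal,
    ← Filter.push_pull', ← φ.isInducing.mapClusterPt_iff, MapClusterPt]

theorem clusterSet_iterate_image (φ : X ≃ₜ Z) (F : Filter Z) (A : Set X) (n : ℕ) :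
    (clusterSet F)^[n] (φ '' A) = φ '' (clusterSet (F.comap φ))^[n] A :=
  have h : Function.Semiconj (φ '' ·) (clusterSet (F.comap φ)) (clusterSet F) :=
    fun A => (clusterSet_image φ F A).symm
  (h.iterate_right n A).symm

end ClusterSet

section AccumulatesOn

variable {G : Type*} [AddGroup G] [TopologicalSpace G] {ι : Type*}

/-- The family `A` accumulates only on `B`: every neighbourhood of `B` of the form `B + U`, with `U`
a neighbourhood of zero, contains all but finitely many members of `A`. -/
def AccumulatesOn (A : ι → Set G) (B : Set G) : Prop :=
  ∀ U ∈ 𝓝 (0 : G), ∀ᶠ i in cofinite, A i ⊆ B + U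

namespace AccumulatesOn

variable {A : ι → Set G} {B : Set G}

theorem image {H F : Type*} [AddGroup H] [TopologicalSpace H] [FunLike F G H]
    [AddMonoidHomClass F G H] (hAB : AccumulatesOn A B) {φ : F} (hφ : Continuous φ) :
    AccumulatesOn (fun i => φ '' A i) (φ '' B) := by
  intro U hU
  have hpre : φ ⁻¹' U ∈ 𝓝 (0 : G) := hφ.continuousAt.preimage_mem_nhds (by simpa)
  filter_upwards [hAB _ hpre] with i hi
  calc φ '' A i ⊆ φ '' (B + φ ⁻¹' U) := image_mono hi
    _ = φ '' B + φ '' (φ ⁻¹' U) := image_add φ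
    _ ⊆ φ '' B + U := add_subset_add_left (image_preimage_subset φ U)

theorem mono_left {A' : ι → Set G} (hAB : AccumulatesOn A B) (hA : ∀ i, A' i ⊆ A i) :
    AccumulatesOn A' B :=
  fun U hU => (hAB U hU).mono fun i hi => (hA i).trans hi

variable [IsTopologicalAddGroup G]

theorem exists_mem_nhds_finite (hAB : AccumulatesOn A B) (hB : IsClosed B) {x : G} (hx : x ∉ B) :
    ∃ V ∈ 𝓝 x, {i | (A i ∩ V).Nonempty}.Finite := by
  have hsub : Tendsto (fun p : G × G => p.1 - p.2) (𝓝 x ×ˢ 𝓝 0) (𝓝 x) := by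
    simpa only [nhds_prod_eq, _root_.sub_zero] using continuous_sub.tendsto (x, (0 : G))
  obtain ⟨V, hV, U, hU, hVU⟩ := mem_prod_iff.1 (hsub (hB.isOpen_compl.mem_nhds hx))
  refine ⟨V, hV, (eventually_cofinite.1 (hAB U hU)).subset ?_⟩
  rintro i ⟨y, hyA, hyV⟩ hi
  obtain ⟨b, hb, u, hu, rfl⟩ := hi hyA
  exact hVU (mk_mem_prod hyV hu) (by simpa using hb)

theorem clusterSet_subset (hAB : AccumulatesOn A B) (hB : IsClosed B) (F : Filter G) :
    clusterSet F (B ∪ ⋃ i, A i) ⊆ B ∪ ⋃ i, clusterSet F (A i) := by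
  rw [clusterSet_union]
  refine union_subset ((_root_.clusterSet_subset hB).trans subset_union_left) fun x hx => ?_
  refine or_iff_not_imp_left.2 fun hxB => ?_
  obtain ⟨V, hV, hfin⟩ := hAB.exists_mem_nhds_finite hB hxB
  rw [← mem_clusterSet_inter_nhds hV] at hx
  have hcover : (⋃ i, A i) ∩ V ⊆ ⋃ i ∈ {i | (A i ∩ V).Nonempty}, A i := by
    rintro y ⟨hy, hyV⟩
    obtain ⟨i, hi⟩ := mem_iUnion.1 hy
    exact mem_biUnion (show i ∈ {i | (A i ∩ V).Nonempty} from ⟨y, hi, hyV⟩) hi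
  have hx' := clusterSet_mono le_rfl hcover hx
  rw [clusterSet_biUnion_finite hfin] at hx'
  exact iUnion₂_subset_iUnion _ _ hx'

theorem isClosed_union_iUnion (hAB : AccumulatesOn A B) (hB : IsClosed B)
    (hA : ∀ i, IsClosed (A i)) : IsClosed (B ∪ ⋃ i, A i) := by
  have hsub := hAB.clusterSet_subset hB ⊤
  simp only [clusterSet_top, (hA _).closure_eq] at hsub
  exact isClosed_of_closure_subset hsub

theorem clusterSet_iterate_subset (hAB : AccumulatesOn A B) (hB : IsClosed B)
    (hA : ∀ i, IsClosed (A i)) (F : Filter G) (n : ℕ) :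
    (clusterSet F)^[n] (B ∪ ⋃ i, A i) ⊆ B ∪ ⋃ i, (clusterSet F)^[n] (A i) := by
  induction n with
  | zero => exact subset_rfl
  | succ n ih =>
    simp only [Function.iterate_succ_apply']
    exact (clusterSet_mono le_rfl ih).trans
      ((hAB.mono_left fun i => _root_.clusterSet_iterate_subset (hA i) n).clusterSet_subset hB F)

end AccumulatesOn

end AccumulatesOn

section WeakDual

variable {Y : Type*} [NormedAddCommGroup Y] [NormedSpace ℝ Y]

/-- The weak*-continuous operator `f ↦ f ∘ L` on the dual. -/
noncomputable def dualPrecomp (L : Y →L[ℝ] Y) : WeakDual ℝ Y →L[ℝ] WeakDual ℝ Y where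
  toFun f := StrongDual.toWeakDual ((WeakDual.toStrongDual f).comp L)
  map_add' _ _ := rfl
  map_smul' _ _ := rfl
  cont := WeakDual.continuous_of_continuous_eval fun y => WeakDual.eval_continuous (L y)

theorem dualPrecomp_one (f : WeakDual ℝ Y) : dualPrecomp (1 : Y →L[ℝ] Y) f = f := rfl

theorem dualPrecomp_mul (L R : Y →L[ℝ] Y) :
    dualPrecomp (R * L) = (dualPrecomp L).comp (dualPrecomp R) := rfl

theorem norm_dualPrecomp_le (L : Y →L[ℝ] Y) (f : WeakDual ℝ Y) :
    ‖WeakDual.toStrongDual (dualPrecomp L f)‖ ≤ ‖WeakDual.toStrongDual f‖ * ‖L‖ :=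
  ContinuousLinearMap.opNorm_comp_le _ _

variable (Y) in
/-- The filter of complements of those sets of functionals which are covered by finitely many norm
balls of radius `r`. A sequence tends to it along `cofinite` as soon as it is `ε`-separated with
`2 * r < ε`. -/
noncomputable def escape (r : ℝ) : Filter (WeakDual ℝ Y) :=
  ⨅ z : WeakDual ℝ Y, 𝓟 {f | r < ‖WeakDual.toStrongDual (f - z)‖}

theorem escape_anti {r s : ℝ} (h : r ≤ s) : escape Y s ≤ escape Y r :=
  iInf_mono fun _ => principal_mono.2 fun _ hf => h.trans_lt hf

theorem clusterSet_escape_eq_empty {r : ℝ} (z : WeakDual ℝ Y) {A : Set (WeakDual ℝ Y)}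
    (hA : ∀ f ∈ A, ‖WeakDual.toStrongDual (f - z)‖ ≤ r) : clusterSet (escape Y r) A = ∅ :=
  clusterSet_eq_empty <| mem_iInf_of_mem z <| mem_principal.2 fun f hf hfA => (hA f hfA).not_gt hf

/-- The affine homeomorphism `f ↦ v + c f` of the dual in its weak* topology. -/
noncomputable def affineHomeo (v : WeakDual ℝ Y) {c : ℝ} (hc : c ≠ 0) :
    WeakDual ℝ Y ≃ₜ WeakDual ℝ Y :=
  (Homeomorph.smulOfNeZero c hc).trans (Homeomorph.addLeft v)

theorem comap_affineHomeo_escape (v : WeakDual ℝ Y) {c : ℝ} (hc : c ≠ 0) (r : ℝ) :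
    (escape Y r).comap (affineHomeo v hc) = escape Y (r / |c|) := by
  rw [escape, comap_iInf, escape, ← (affineHomeo v hc).toEquiv.iInf_comp]
  refine iInf_congr fun z => ?_
  rw [comap_principal]
  congr 1
  ext f
  have h : affineHomeo v hc f - affineHomeo v hc z = c • (f - z) := by
    simp [affineHomeo, smul_sub]
  change r < ‖WeakDual.toStrongDual (affineHomeo v hc f - affineHomeo v hc z)‖ ↔ _
  rw [h, map_smul, norm_smul, Real.norm_eq_abs, mem_ofPred_eq, div_lt_iff₀' (abs_pos.2 hc)]

theorem clusterSet_escape_iterate_affine (v : WeakDual ℝ Y) {c : ℝ} (hc : c ≠ 0) (r : ℝ)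
    (A : Set (WeakDual ℝ Y)) (n : ℕ) :
    (clusterSet (escape Y r))^[n] ((fun f => v + c • f) '' A) =
      (fun f => v + c • f) '' (clusterSet (escape Y (r / |c|)))^[n] A := by
  rw [← comap_affineHomeo_escape v hc]
  exact clusterSet_iterate_image (affineHomeo v hc) _ A n

theorem clusterSet_escape_iterate_affine_eq_empty {a c r : ℝ} (hr : 0 ≤ r) (hc : c ≠ 0)
    (hca : |c| ≤ a) (v : WeakDual ℝ Y) {A : Set (WeakDual ℝ Y)} {n : ℕ}
    (hA : (clusterSet (escape Y (r / a)))^[n] A = ∅) :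
    (clusterSet (escape Y r))^[n] ((fun f => v + c • f) '' A) = ∅ := by
  have hra : r / a ≤ r / |c| := div_le_div_of_nonneg_left hr (abs_pos.2 hc) hca
  rw [clusterSet_escape_iterate_affine v hc, image_eq_empty, ← subset_empty_iff, ← hA]
  exact clusterSet_iterate_mono (escape_anti hra) subset_rfl n

theorem tendsto_escape {ε r : ℝ} (hr : 2 * r < ε) {u : ℕ → WeakDual ℝ Y}
    (hu : Pairwise fun m n => ε ≤ ‖WeakDual.toStrongDual (u m - u n)‖) :
    Tendsto u cofinite (escape Y r) := by
  refine tendsto_iInf.2 fun z => tendsto_principal.2 (Set.Subsingleton.finite ?_)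
  intro m hm n hn
  simp only [mem_compl_iff, mem_ofPred_eq, not_lt] at hm hn
  by_contra hmn
  have htri : ‖WeakDual.toStrongDual (u m - u n)‖ ≤
      ‖WeakDual.toStrongDual (u m - z)‖ + ‖WeakDual.toStrongDual (u n - z)‖ := by
    rw [← sub_sub_sub_cancel_right _ _ z, map_sub]
    exact norm_sub_le _ _
  linarith [hu hmn]

theorem mem_clusterSet_escape {ε r : ℝ} (hr : 2 * r < ε) {A : Set (WeakDual ℝ Y)}
    {u : ℕ → WeakDual ℝ Y} {f : WeakDual ℝ Y} (huA : ∀ n, u n ∈ A)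
    (huf : Tendsto u cofinite (𝓝 f))
    (hu : Pairwise fun m n => ε ≤ ‖WeakDual.toStrongDual (u m - u n)‖) :
    f ∈ clusterSet (escape Y r) A :=
  NeBot.mono (map_neBot (f := cofinite) (m := u)) <| le_inf huf <| le_inf (tendsto_escape hr hu) <|
    tendsto_principal.2 <| Eventually.of_forall huA

theorem tendsto_dualPrecomp_prod_principal {α : Type*} {l : Filter α} {R : α → Y →L[ℝ] Y}
    (hR : ∀ y, Tendsto (fun q => R q y) l (𝓝 0)) :
    Tendsto (fun p : α × WeakDual ℝ Y => dualPrecomp (R p.1) p.2)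
      (l ×ˢ 𝓟 {h | ‖WeakDual.toStrongDual h‖ ≤ 1}) (𝓝 0) := by
  refine tendsto_iff_forall_eval_tendsto_topDualPairing.2 fun y => ?_
  refine squeeze_zero_norm' (a := fun p : α × WeakDual ℝ Y => ‖R p.1 y‖) ?_ ?_
  · filter_upwards [prod_mem_prod univ_mem (mem_principal_self _)] with p hp
    exact ((WeakDual.toStrongDual p.2).le_of_opNorm_le hp.2 (R p.1 y)).trans_eq (_root_.one_mul _)
  · exact (tendsto_zero_iff_norm_tendsto_zero.1 (hR y)).comp tendsto_fst

end WeakDual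

/-- A weak*-compact set `closure (range e)` in the unit ball of `Y*` whose generators `e k`
accumulate only on smaller copies of it: the two dilates by `±a`, and the pieces
`g q + s q • (closure (range e) ∘ R q)` with `|s q| ≤ a`, which shrink to the points `g q` of the
dilates because `R q → 0` pointwise. The operators `R q` lie in a bounded monoid `M`, so that
compositions of pieces remain bounded. -/
structure SelfSimilarSystem (Y : Type*) [NormedAddCommGroup Y] [NormedSpace ℝ Y]
    (ι κ : Type*) where
  e : κ → WeakDual ℝ Y
  norm_e_le : ∀ k, ‖WeakDual.toStrongDual (e k)‖ ≤ 1
  M : Submonoid (Y →L[ℝ] Y)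
  K : ℝ
  norm_le : ∀ L ∈ M, ‖L‖ ≤ K
  R : ι → Y →L[ℝ] Y
  R_mem : ∀ q, R q ∈ M
  tendsto_R : ∀ y, Tendsto (fun q => R q y) cofinite (𝓝 0)
  a : ℝ
  a_pos : 0 < a
  a_lt_one : a < 1
  s : ι → ℝ
  s_ne_zero : ∀ q, s q ≠ 0
  abs_s_le : ∀ q, |s q| ≤ a
  g : ι → WeakDual ℝ Y
  g_mem : ∀ q, g q ∈ a • closure (range e) ∪ (-a) • closure (range e)
  accumulatesOn : AccumulatesOn (fun k => {e k})
    ((a • closure (range e) ∪ (-a) • closure (range e)) ∪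
      ⋃ q, (fun f => g q + s q • f) '' (dualPrecomp (R q) '' closure (range e)))

namespace SelfSimilarSystem

variable {Y : Type*} [NormedAddCommGroup Y] [NormedSpace ℝ Y] {ι κ : Type*}
  (S : SelfSimilarSystem Y ι κ) (L : Y →L[ℝ] Y)

/-- The set `closure (range e)` precomposed with `L`. -/
def body : Set (WeakDual ℝ Y) := dualPrecomp L '' closure (range S.e)

/-- The union of the two dilates by `±a`, precomposed with `L`. -/
def dilates : Set (WeakDual ℝ Y) := S.a • S.body L ∪ (-S.a) • S.body L

/-- The `q`-th piece `g q + s q • (closure (range e) ∘ R q)`, precomposed with `L`. -/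
def piece (q : ι) : Set (WeakDual ℝ Y) :=
  (fun f => dualPrecomp L (S.g q) + S.s q • f) '' S.body (S.R q * L)

theorem body_one : S.body 1 = closure (range S.e) :=
  (image_congr fun f _ => dualPrecomp_one f).trans (image_id' _)

theorem image_body (R : Y →L[ℝ] Y) : dualPrecomp L '' S.body R = S.body (R * L) := by
  rw [body, body, image_image, dualPrecomp_mul]
  rfl

theorem image_dilates_one : dualPrecomp L '' S.dilates 1 = S.dilates L := by
  simp only [dilates, image_union, image_smul_set, image_body, _root_.one_mul]

theorem image_piece_one (q : ι) : dualPrecomp L '' S.piece 1 q = S.piece L q := by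
  rw [piece, piece, ← S.image_body L (S.R q), _root_.mul_one, image_image, image_image]
  simp only [map_add, map_smul, dualPrecomp_one]

theorem norm_le_one {f : WeakDual ℝ Y} (hf : f ∈ closure (range S.e)) :
    ‖WeakDual.toStrongDual f‖ ≤ 1 := by
  have hsub : closure (range S.e) ⊆ WeakDual.toStrongDual ⁻¹' Metric.closedBall 0 1 :=
    closure_minimal (range_subset_iff.2 fun k => mem_closedBall_zero_iff.2 (S.norm_e_le k))
      (WeakDual.isClosed_closedBall 0 1)
  exact mem_closedBall_zero_iff.1 (hsub hf)

theorem norm_le_of_mem_body {f : WeakDual ℝ Y} (hL : L ∈ S.M) (hf : f ∈ S.body L) :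
    ‖WeakDual.toStrongDual f‖ ≤ S.K := by
  obtain ⟨h, hh, rfl⟩ := hf
  calc ‖WeakDual.toStrongDual (dualPrecomp L h)‖
      ≤ ‖WeakDual.toStrongDual h‖ * ‖L‖ := norm_dualPrecomp_le L h
    _ ≤ 1 * S.K := by gcongr <;> [exact S.norm_le_one hh; exact S.norm_le L hL]
    _ = S.K := _root_.one_mul _

theorem isClosed_body : IsClosed (S.body L) := by
  have hcompact : IsCompact (closure (range S.e)) :=
    (WeakDual.isCompact_closedBall 0 1).of_isClosed_subset isClosed_closure fun f hf =>
      mem_closedBall_zero_iff.2 (S.norm_le_one hf)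
  exact (hcompact.image (dualPrecomp L).continuous).isClosed

theorem isClosed_dilates : IsClosed (S.dilates L) :=
  ((S.isClosed_body L).smul_of_ne_zero S.a_pos.ne').union
    ((S.isClosed_body L).smul_of_ne_zero (neg_ne_zero.2 S.a_pos.ne'))

theorem isClosed_piece (q : ι) : IsClosed (S.piece L q) :=
  (affineHomeo _ (S.s_ne_zero q)).isClosedMap _ (S.isClosed_body _)

theorem accumulatesOn_piece_one : AccumulatesOn (S.piece 1) (S.dilates 1) := by
  intro U hU
  have hsmall := eventually_prod_principal_iff.1
    ((tendsto_dualPrecomp_prod_principal S.tendsto_R).eventually_mem hU)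
  filter_upwards [hsmall] with q hq
  rintro _ ⟨_, ⟨h, hh, rfl⟩, rfl⟩
  refine add_mem_add (by simpa only [dilates, body_one, dualPrecomp_one] using S.g_mem q) ?_
  rw [_root_.mul_one, ← map_smul]
  refine hq _ ?_
  rw [map_smul, norm_smul, Real.norm_eq_abs]
  exact mul_le_one₀ ((S.abs_s_le q).trans S.a_lt_one.le) (norm_nonneg _) (S.norm_le_one hh)

theorem accumulatesOn_piece : AccumulatesOn (S.piece L) (S.dilates L) := by
  simpa only [image_piece_one, image_dilates_one] using
    S.accumulatesOn_piece_one.image (dualPrecomp L).continuous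

theorem accumulatesOn_singleton :
    AccumulatesOn (fun k => {dualPrecomp L (S.e k)}) (S.dilates L ∪ ⋃ q, S.piece L q) := by
  have hone : AccumulatesOn (fun k => {S.e k}) (S.dilates 1 ∪ ⋃ q, S.piece 1 q) := by
    rw [dilates, body_one]
    simpa only [piece, body, _root_.mul_one, dualPrecomp_one] using S.accumulatesOn
  simpa only [image_singleton, image_union, image_iUnion, image_dilates_one, image_piece_one] using
    hone.image (dualPrecomp L).continuous

theorem clusterSet_body_subset {r : ℝ} (hr : 0 ≤ r) :
    clusterSet (escape Y r) (S.body L) ⊆ S.dilates L ∪ ⋃ q, S.piece L q := by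
  set T := S.dilates L ∪ ⋃ q, S.piece L q
  have hT : IsClosed T := (S.accumulatesOn_piece L).isClosed_union_iUnion (S.isClosed_dilates L)
    (S.isClosed_piece L)
  have hacc := S.accumulatesOn_singleton L
  have hbody : S.body L ⊆ T ∪ ⋃ k, {dualPrecomp L (S.e k)} := by
    refine (image_closure_subset_closure_image (dualPrecomp L).continuous).trans
      (closure_minimal ?_ (hacc.isClosed_union_iUnion hT fun _ => isClosed_singleton))
    rw [iUnion_singleton_eq_range, ← range_comp]
    exact subset_union_right
  have hsingle (k : κ) : clusterSet (escape Y r) {dualPrecomp L (S.e k)} = ∅ :=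
    clusterSet_escape_eq_empty (dualPrecomp L (S.e k)) (by simpa using hr)
  simpa only [hsingle, iUnion_empty, union_empty] using
    (clusterSet_mono le_rfl hbody).trans (hacc.clusterSet_subset hT (escape Y r))

theorem clusterSet_iterate_dilates_eq_empty {r : ℝ} (hr : 0 ≤ r) {n : ℕ}
    (hn : (clusterSet (escape Y (r / S.a)))^[n] (S.body L) = ∅) :
    (clusterSet (escape Y r))^[n] (S.dilates L) = ∅ := by
  have hdilate {c : ℝ} (hc : |c| = S.a) : (clusterSet (escape Y r))^[n] (c • S.body L) = ∅ := by
    simpa only [_root_.zero_add, image_smul] using clusterSet_escape_iterate_affine_eq_empty hr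
      (abs_pos.1 (hc ▸ S.a_pos)) hc.le 0 hn
  rw [dilates, clusterSet_iterate_union, hdilate (abs_of_pos S.a_pos),
    hdilate (by rw [abs_neg, abs_of_pos S.a_pos]), union_empty]

theorem clusterSet_iterate_body_eq_empty {r : ℝ} (hr : 0 ≤ r) {n : ℕ}
    (hn : ∀ L ∈ S.M, (clusterSet (escape Y (r / S.a)))^[n] (S.body L) = ∅) (hL : L ∈ S.M) :
    (clusterSet (escape Y r))^[n + (n + 1)] (S.body L) = ∅ := by
  have hpiece (q : ι) : (clusterSet (escape Y r))^[n] (S.piece L q) = ∅ :=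
    clusterSet_escape_iterate_affine_eq_empty hr (S.s_ne_zero q) (S.abs_s_le q) _
      (hn _ (S.M.mul_mem (S.R_mem q) hL))
  have hdilates : (clusterSet (escape Y r))^[n + 1] (S.body L) ⊆ S.dilates L := by
    rw [Function.iterate_succ_apply]
    refine (clusterSet_iterate_mono le_rfl (S.clusterSet_body_subset L hr) n).trans ?_
    simpa only [hpiece, iUnion_empty, union_empty] using
      (S.accumulatesOn_piece L).clusterSet_iterate_subset (S.isClosed_dilates L)
        (S.isClosed_piece L) (escape Y r) n
  rw [Function.iterate_add_apply, ← subset_empty_iff,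
    ← S.clusterSet_iterate_dilates_eq_empty L hr (hn L hL)]
  exact clusterSet_iterate_mono le_rfl hdilates n

theorem exists_clusterSet_iterate_body_eq_empty (N : ℕ) {r : ℝ} (hr : 0 ≤ r)
    (hN : S.K ≤ r / S.a ^ N) :
    ∃ n, ∀ L ∈ S.M, (clusterSet (escape Y r))^[n] (S.body L) = ∅ := by
  induction N generalizing r with
  | zero =>
    rw [_root_.pow_zero, _root_.div_one] at hN
    exact ⟨1, fun L hL => clusterSet_escape_eq_empty 0 fun f hf => by
      simpa using (S.norm_le_of_mem_body L hL hf).trans hN⟩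
  | succ N ih =>
    obtain ⟨n, hn⟩ := ih (div_nonneg hr S.a_pos.le) (by rwa [div_div, ← _root_.pow_succ'])
    exact ⟨n + (n + 1), fun L hL => S.clusterSet_iterate_body_eq_empty L hr hn hL⟩

theorem exists_clusterSet_iterate_eq_empty {r : ℝ} (hr : 0 < r) :
    ∃ n, (clusterSet (escape Y r))^[n] (closure (range S.e)) = ∅ := by
  have hpow : Tendsto (fun N => S.K * S.a ^ N) atTop (𝓝 0) := by
    simpa using (tendsto_pow_atTop_nhds_zero_of_lt_one S.a_pos.le S.a_lt_one).const_mul S.K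
  obtain ⟨N, hN⟩ := (hpow.eventually (ge_mem_nhds hr)).exists
  obtain ⟨n, hn⟩ := S.exists_clusterSet_iterate_body_eq_empty N hr.le
    ((le_div_iff₀ (pow_pos S.a_pos N)).2 hN)
  exact ⟨n, S.body_one ▸ hn 1 S.M.one_mem⟩

end SelfSimilarSystem

section Szlenk

variable {Y : Type*} [NormedAddCommGroup Y] [NormedSpace ℝ Y]

theorem image_wstarCl_subset_closure (A : Set (Y →L[ℝ] ℝ)) :
    StrongDual.toWeakDual '' wstarCl A ⊆ closure (StrongDual.toWeakDual '' A) := by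
  rintro _ ⟨f, hf, rfl⟩
  refine mem_closure_iff_nhds.2 fun U hU => ?_
  obtain ⟨s, δ, hδ, hsU⟩ :=
    ((LinearMap.weakBilin_withSeminorms (topDualPairing ℝ Y)).mem_nhds_iff _ U).1 hU
  obtain ⟨g, hgA, hg⟩ := hf s δ hδ
  exact ⟨StrongDual.toWeakDual g,
    hsU ((Seminorm.mem_ball _).2 (Seminorm.finset_sup_apply_lt hδ hg)), mem_image_of_mem _ hgA⟩

theorem image_PmodSet_subset {ε r : ℝ} (hr : 2 * r < ε) (B : Set (Y →L[ℝ] ℝ)) (n : ℕ) :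
    StrongDual.toWeakDual '' PmodSet Y ε B (n : Ordinal) ⊆
      (clusterSet (escape Y r))^[n] (StrongDual.toWeakDual '' B) := by
  induction n with
  | zero => simp [PmodSet]
  | succ n ih =>
    rw [Function.iterate_succ_apply', Nat.cast_succ, PmodSet, Ordinal.limitRecOn_add_one]
    rintro _ ⟨f, ⟨-, u, hu, huf, hsep⟩, rfl⟩
    refine mem_clusterSet_escape hr (fun k => ih (mem_image_of_mem _ (hu k))) ?_ hsep
    rw [Nat.cofinite_eq_atTop]
    exact tendsto_iff_forall_eval_tendsto_topDualPairing.2 huf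

end Szlenk

theorem coordFn_apply (k : ℕ) (x : linf) : coordFn k x = x k := rfl

theorem linf_ext {x y : linf} (h : ∀ k, x k = y k) : x = y := lp.ext (funext h)

theorem ek_apply (k j : ℕ) : ek k j = if j = k then (1 : ℝ) else 0 := by
  rw [ek, lp.single_apply, Pi.single_apply]

theorem apply_eq_zero_of_mem_Esub {d : ℕ → ℕ} {n k : ℕ} {x : linf} (hx : x ∈ Esub d n)
    (hk : ¬(1 ≤ k ∧ k ≤ d n)) : x k = 0 := by
  have hle : Esub d n ≤ (coordFn k).ker := by
    refine Submodule.span_le.2 ?_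
    rintro _ ⟨j, hj1, hj2, rfl⟩
    have hkj : k ≠ j := by rintro rfl; exact hk ⟨hj1, hj2⟩
    change ek j k = 0
    rw [ek_apply, if_neg hkj]
  exact hle hx

theorem mem_Esub_of_apply_eq_zero {d : ℕ → ℕ} {n : ℕ} {x : linf}
    (hx : ∀ k, ¬(1 ≤ k ∧ k ≤ d n) → x k = 0) : x ∈ Esub d n := by
  have hsum : x = ∑ k ∈ Finset.Icc 1 (d n), x k • ek k := by
    refine linf_ext fun j => ?_
    rw [← coordFn_apply _ (∑ _ ∈ _, _), map_sum]
    simp only [map_smul, coordFn_apply, ek_apply, _root_.smul_eq_mul, _root_.mul_ite,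
      _root_.mul_one, MulZeroClass.mul_zero, Finset.sum_ite_eq, Finset.mem_Icc]
    split_ifs with hj
    · rfl
    · exact hx j hj
  rw [hsum]
  exact Submodule.sum_mem _ fun k hk => Submodule.smul_mem _ _ <| Submodule.subset_span
    ⟨k, (Finset.mem_Icc.1 hk).1, (Finset.mem_Icc.1 hk).2, rfl⟩

namespace BDSetup

variable (S : BDSetup)

theorem d_lt_succ_of_pos {n : ℕ} (hn : 1 ≤ n) (hd : 1 ≤ S.d n) : S.d n < S.d (n + 1) := by
  rcases hn.eq_or_lt with rfl | hn
  · rw [S.hd1, S.hd2]; norm_num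
  · obtain ⟨k, ⟨hk1, hk2⟩, -⟩ := (S.hφ n hn).surjOn (show ((1, 1, 1, 1, 1) : ℤ × ℕ × ℕ × ℤ × ℕ) ∈ _
      from ⟨.inl rfl, .inl rfl, le_rfl, hn, le_rfl, S.hd1.ge, le_rfl, hd⟩)
    exact hk1.trans_le hk2

theorem one_le_d {n : ℕ} (hn : 1 ≤ n) : 1 ≤ S.d n := by
  induction n, hn using Nat.le_induction with
  | base => exact S.hd1.ge
  | succ n hn ih => exact ih.trans (S.d_lt_succ_of_pos hn ih).le

theorem strictMono_d_add {m : ℕ} (hm : 1 ≤ m) : StrictMono fun n => S.d (m + n) :=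
  strictMono_nat_of_lt_succ fun _ =>
    S.d_lt_succ_of_pos (le_add_right hm) (S.one_le_d (le_add_right hm))

theorem d_mono {m n : ℕ} (hm : 1 ≤ m) (hmn : m ≤ n) : S.d m ≤ S.d n := by
  obtain ⟨j, rfl⟩ := Nat.exists_eq_add_of_le hmn
  exact (S.strictMono_d_add hm).monotone (Nat.zero_le j)

theorem le_d {n : ℕ} (hn : 1 ≤ n) : n ≤ S.d n := by
  induction n, hn using Nat.le_induction with
  | base => exact S.hd1.ge
  | succ n hn ih => exact Nat.succ_le_of_lt (ih.trans_lt (S.d_lt_succ_of_pos hn (S.one_le_d hn)))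

theorem exists_d_lt_le {m k : ℕ} (hm : 1 ≤ m) (hk : S.d m < k) :
    ∃ n, m ≤ n ∧ S.d n < k ∧ k ≤ S.d (n + 1) := by
  obtain ⟨j, hj⟩ := (S.strictMono_d_add hm).exists_between_of_tendsto_atTop
    (S.strictMono_d_add hm).tendsto_atTop hk
  exact ⟨m + j, le_add_right le_rfl, hj⟩

theorem pi_mem (m : ℕ) (x : linf) : S.pi m x ∈ Esub S.d m :=
  mem_Esub_of_apply_eq_zero fun k hk => by rw [S.hpi, if_neg hk]

theorem pi_apply {m k : ℕ} (hk : 1 ≤ k) (hkm : k ≤ S.d m) (x : linf) : S.pi m x k = x k := by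
  rw [S.hpi, if_pos ⟨hk, hkm⟩]

theorem pi_congr {m : ℕ} {x y : linf} (h : ∀ k, 1 ≤ k → k ≤ S.d m → x k = y k) :
    S.pi m x = S.pi m y := by
  refine linf_ext fun k => ?_
  rw [S.hpi, S.hpi]
  split_ifs with hk
  · exact h k hk.1 hk.2
  · rfl

theorem pi_eq_self {m : ℕ} {x : linf} (hx : x ∈ Esub S.d m) : S.pi m x = x := by
  refine linf_ext fun k => ?_
  rw [S.hpi]
  split_ifs with hk
  · rfl
  · exact (apply_eq_zero_of_mem_Esub hx hk).symm

theorem iMap_succ_apply {n : ℕ} (hn : 2 ≤ n) {x : linf} (hx : x ∈ Esub S.d n) (k : ℕ) :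
    S.iMap n (n + 1) x k = x k + if k ∈ Finset.Ioc (S.d n) (S.d (n + 1)) then
      S.a * ((S.φ k).1 : ℝ) * x (S.φ k).2.1 +
        S.b * ((S.φ k).2.2.2.1 : ℝ) *
          (x - S.iMap (S.φ k).2.2.1 n (S.pi (S.φ k).2.2.1 x)) (S.φ k).2.2.2.2 else 0 := by
  rw [S.histep n hn x hx, ← coordFn_apply, map_add, map_sum, coordFn_apply]
  simp only [map_smul, coordFn_apply, ek_apply, _root_.smul_eq_mul, _root_.mul_ite,
    _root_.mul_one, MulZeroClass.mul_zero, Finset.sum_ite_eq]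

theorem iMap_succ_apply_of_le {n k : ℕ} (hn : 1 ≤ n) {x : linf} (hx : x ∈ Esub S.d n)
    (hk : k ≤ S.d n) : S.iMap n (n + 1) x k = x k := by
  rcases hn.eq_or_lt with rfl | hn
  · rw [S.hi12 x hx]
  · rw [S.iMap_succ_apply hn hx, if_neg fun h => (Finset.mem_Ioc.1 h).1.not_ge hk, _root_.add_zero]

theorem iMap_succ_mem {n : ℕ} (hn : 1 ≤ n) {x : linf} (hx : x ∈ Esub S.d n) :
    S.iMap n (n + 1) x ∈ Esub S.d (n + 1) := by
  refine mem_Esub_of_apply_eq_zero fun k hk => ?_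
  have hd := S.d_mono hn n.le_succ
  have hxk : x k = 0 := apply_eq_zero_of_mem_Esub hx fun h => hk ⟨h.1, h.2.trans hd⟩
  rcases hn.eq_or_lt with rfl | hn
  · rw [S.hi12 x hx, hxk]
  · rw [S.iMap_succ_apply hn hx, hxk, if_neg, _root_.add_zero]
    exact fun h => hk ⟨(Nat.zero_le _).trans_lt (Finset.mem_Ioc.1 h).1, (Finset.mem_Ioc.1 h).2⟩

/-- The embedding `i_{m,n}`, extended by the identity to `n = m`. -/
noncomputable def emb (m n : ℕ) (x : linf) : linf := if n = m then x else S.iMap m n x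

theorem emb_self (m : ℕ) (x : linf) : S.emb m m x = x := if_pos rfl

theorem emb_of_lt {m n : ℕ} (h : m < n) (x : linf) : S.emb m n x = S.iMap m n x := if_neg h.ne'

theorem emb_succ {m n : ℕ} (hm : 1 ≤ m) (hmn : m ≤ n) {x : linf} (hx : x ∈ Esub S.d m) :
    S.emb m (n + 1) x = S.iMap n (n + 1) (S.emb m n x) := by
  rw [S.emb_of_lt (Nat.lt_succ_of_le hmn)]
  rcases hmn.eq_or_lt with rfl | hmn
  · rw [emb_self]
  · rw [S.emb_of_lt hmn, S.hicomp m n hm hmn x hx]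

theorem emb_mem {m n : ℕ} (hm : 1 ≤ m) (hmn : m ≤ n) {x : linf} (hx : x ∈ Esub S.d m) :
    S.emb m n x ∈ Esub S.d n := by
  induction n, hmn using Nat.le_induction with
  | base => rwa [emb_self]
  | succ n hmn ih =>
    rw [S.emb_succ hm hmn hx]
    exact S.iMap_succ_mem (hm.trans hmn) ih

theorem emb_apply_of_le {m n l k : ℕ} (hm : 1 ≤ m) (hmn : m ≤ n) (hnl : n ≤ l) {x : linf}
    (hx : x ∈ Esub S.d m) (hk : k ≤ S.d n) : S.emb m l x k = S.emb m n x k := by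
  induction l, hnl using Nat.le_induction with
  | base => rfl
  | succ l hnl ih =>
    rw [S.emb_succ hm (hmn.trans hnl) hx, ← ih]
    exact S.iMap_succ_apply_of_le (hm.trans (hmn.trans hnl)) (S.emb_mem hm (hmn.trans hnl) hx)
      (hk.trans (S.d_mono (hm.trans hmn) hnl))

theorem emb_emb {m n l : ℕ} (hm : 1 ≤ m) (hmn : m ≤ n) (hnl : n ≤ l) {x : linf}
    (hx : x ∈ Esub S.d m) : S.emb n l (S.emb m n x) = S.emb m l x := by
  induction l, hnl using Nat.le_induction with
  | base => rw [emb_self]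
  | succ l hnl ih =>
    rw [S.emb_succ (hm.trans hmn) hnl (S.emb_mem hm hmn hx), ih,
      S.emb_succ hm (hmn.trans hnl) hx]

theorem P_apply_eq_emb {m n k : ℕ} (hm : 1 ≤ m) (hmn : m ≤ n) (x : linf) (hk : k ≤ S.d n) :
    S.P m x k = S.emb m n (S.pi m x) k := by
  refine tendsto_nhds_unique (S.hPlim m hm x k) (tendsto_const_nhds.congr' ?_)
  filter_upwards [eventually_gt_atTop n] with l hl
  rw [← S.emb_of_lt (hmn.trans_lt hl), S.emb_apply_of_le hm hmn hl.le (S.pi_mem m x) hk]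

theorem P_apply_of_le {m k : ℕ} (hk : 1 ≤ k) (hkm : k ≤ S.d m) (hm : 1 ≤ m) (x : linf) :
    S.P m x k = x k := by
  rw [S.P_apply_eq_emb hm le_rfl x hkm, emb_self, S.pi_apply hk hkm]

theorem P_eq_of_emb_eq {m n : ℕ} (hm : 1 ≤ m) (hn : 1 ≤ n) {x y : linf}
    (h : ∀ l, m ≤ l → n ≤ l → S.emb m l (S.pi m x) = S.emb n l (S.pi n y)) :
    S.P m x = S.P n y := by
  refine linf_ext fun k => ?_
  have hml : m ≤ max (max m n) k := (le_max_left m n).trans (le_max_left _ _)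
  have hnl : n ≤ max (max m n) k := (le_max_right m n).trans (le_max_left _ _)
  have hk : k ≤ S.d (max (max m n) k) := (le_max_right _ _).trans (S.le_d (hm.trans hml))
  rw [S.P_apply_eq_emb hm hml x hk, S.P_apply_eq_emb hn hnl y hk, h _ hml hnl]

theorem P_congr {m : ℕ} (hm : 1 ≤ m) {x y : linf} (h : ∀ k, 1 ≤ k → k ≤ S.d m → x k = y k) :
    S.P m x = S.P m y :=
  S.P_eq_of_emb_eq hm hm fun _ _ _ => by rw [S.pi_congr h]

theorem pi_P {m n : ℕ} (hm : 1 ≤ m) (hmn : m ≤ n) (x : linf) :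
    S.pi n (S.P m x) = S.emb m n (S.pi m x) := by
  rw [← S.pi_eq_self (S.emb_mem hm hmn (S.pi_mem m x))]
  exact S.pi_congr fun k _ hk => S.P_apply_eq_emb hm hmn x hk

theorem P_P_of_ge {m n : ℕ} (hmn : m ≤ n) (x : linf) : S.P n (S.P m x) = S.P m x := by
  rcases Nat.eq_zero_or_pos m with rfl | hm
  · simp only [S.hP0, zero_apply, map_zero]
  · refine S.P_eq_of_emb_eq (Nat.le_trans hm hmn) hm fun l hnl _ => ?_
    rw [S.pi_P hm hmn, S.emb_emb hm hmn hnl (S.pi_mem m x)]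

theorem P_P_of_le {m n : ℕ} (hmn : m ≤ n) (x : linf) : S.P m (S.P n x) = S.P m x := by
  rcases Nat.eq_zero_or_pos m with rfl | hm
  · simp only [S.hP0, zero_apply]
  · exact S.P_congr hm fun k hk hkm =>
      S.P_apply_of_le hk (hkm.trans (S.d_mono hm hmn)) (Nat.le_trans hm hmn) x

theorem P_pi {m : ℕ} (hm : 1 ≤ m) (x : linf) : S.P m (S.pi m x) = S.P m x :=
  S.P_congr hm fun _ hk hkm => S.pi_apply hk hkm x

theorem P_mem_Xsub (m : ℕ) (x : linf) : S.P m x ∈ Xsub S := by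
  rcases Nat.eq_zero_or_pos m with rfl | hm
  · rw [S.hP0]
    exact (Xsub S).zero_mem
  · rw [← S.P_pi hm]
    exact Submodule.le_topologicalClosure _ <| Submodule.subset_span <|
      mem_biUnion (show m ∈ {m : ℕ | 1 ≤ m} from hm) (mem_image_of_mem _ (S.pi_mem m x))

theorem P_apply {n k : ℕ} (hn : 2 ≤ n) (hk : S.d n < k) (hkn : k ≤ S.d (n + 1)) (x : linf) :
    S.P n x k = S.a * ((S.φ k).1 : ℝ) * x (S.φ k).2.1 +
      S.b * ((S.φ k).2.2.2.1 : ℝ) *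
        (x (S.φ k).2.2.2.2 - S.P (S.φ k).2.2.1 x (S.φ k).2.2.2.2) := by
  obtain ⟨-, -, hm, hmn, hi, him, hj, hjn⟩ := (S.hφ n hn).mapsTo ⟨hk, hkn⟩
  have hn1 : 1 ≤ n := hm.trans hmn.le
  have hxk : S.pi n x k = 0 := by rw [S.hpi, if_neg fun h => hk.not_ge h.2]
  have hxi : S.pi n x (S.φ k).2.1 = x (S.φ k).2.1 :=
    S.pi_apply hi (him.trans (S.d_mono hm hmn.le)) x
  have hpi : S.pi (S.φ k).2.2.1 (S.pi n x) = S.pi (S.φ k).2.2.1 x :=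
    S.pi_congr fun l hl hlm => S.pi_apply hl (hlm.trans (S.d_mono hm hmn.le)) x
  have hxj : (S.pi n x - S.iMap (S.φ k).2.2.1 n (S.pi (S.φ k).2.2.1 (S.pi n x))) (S.φ k).2.2.2.2 =
      x (S.φ k).2.2.2.2 - S.P (S.φ k).2.2.1 x (S.φ k).2.2.2.2 := by
    rw [hpi, S.P_apply_eq_emb hm hmn.le x hjn, S.emb_of_lt hmn, ← S.pi_apply hj hjn x]
    rfl
  rw [S.P_apply_eq_emb hn1 n.le_succ x hkn, S.emb_of_lt n.lt_succ_self,
    S.iMap_succ_apply hn (S.pi_mem n x), if_pos (Finset.mem_Ioc.2 ⟨hk, hkn⟩), hxk, hxi, hxj,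
    _root_.zero_add]

theorem isClosed_setOf_tendsto_P : IsClosed {x | Tendsto (fun n => S.P n x) atTop (𝓝 x)} :=
  have hlip (n : ℕ) : LipschitzWith S.lam.toNNReal (S.P n) :=
    (S.P n).lipschitz.weaken <|
      (Real.le_toNNReal_iff_coe_le (zero_le_one.trans S.hlam.le)).2 (S.hPnorm n)
  (LipschitzWith.uniformEquicontinuous _ _ hlip).equicontinuous.isClosed_setOfPred_tendsto
    continuous_id

theorem tendsto_P {x : linf} (hx : x ∈ Xsub S) : Tendsto (fun n => S.P n x) atTop (𝓝 x) := by
  refine closure_minimal (fun y hy => ?_) S.isClosed_setOf_tendsto_P hx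
  induction hy using Submodule.span_induction with
  | mem y hy =>
    obtain ⟨m, -, z, -, rfl⟩ := mem_iUnion₂.1 hy
    refine tendsto_const_nhds.congr' ?_
    filter_upwards [eventually_ge_atTop m] with n hmn
    exact (S.P_P_of_ge hmn z).symm
  | zero => simp
  | add y z _ _ hy hz => simpa only [mem_ofPred_eq, map_add] using hy.add hz
  | smul c y _ hy => simpa only [mem_ofPred_eq, map_smul] using hy.const_smul c

/-- The complementary projection `I - P_m` on `X`. -/
noncomputable def R (m : ℕ) : Xsub S →L[ℝ] Xsub S :=
  ((ContinuousLinearMap.id ℝ linf - S.P m).comp (Xsub S).subtypeL).codRestrict (Xsub S)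
    fun x => (Xsub S).sub_mem x.2 (S.P_mem_Xsub m _)

theorem coe_R (m : ℕ) (x : Xsub S) : (S.R m x : linf) = x - S.P m x := rfl

theorem R_zero : S.R 0 = 1 := by
  ext1 x
  refine Subtype.ext ?_
  rw [coe_R, hP0, zero_apply, _root_.sub_zero]
  rfl

theorem R_mul (m n : ℕ) : S.R m * S.R n = S.R (max m n) := by
  ext1 x
  refine Subtype.ext ?_
  change (S.R m (S.R n x) : linf) = _
  simp only [coe_R, map_sub]
  rcases le_total m n with h | h
  · rw [max_eq_right h, S.P_P_of_le h]; abel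
  · rw [max_eq_left h, S.P_P_of_ge h]; abel

theorem norm_R_le (m : ℕ) : ‖S.R m‖ ≤ 1 + S.lam := by
  refine ContinuousLinearMap.opNorm_le_bound _ (by linarith [S.hlam]) fun x => ?_
  calc ‖(x : linf) - S.P m x‖ ≤ ‖(x : linf)‖ + ‖S.P m x‖ := norm_sub_le _ _
    _ ≤ ‖(x : linf)‖ + S.lam * ‖(x : linf)‖ := by
      gcongr; exact (S.P m).le_of_opNorm_le (S.hPnorm m) x
    _ = (1 + S.lam) * ‖x‖ := by rw [Submodule.coe_norm]; ring

theorem tendsto_R (x : Xsub S) : Tendsto (fun m => S.R m x) atTop (𝓝 0) := by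
  rw [tendsto_subtype_rng]
  simpa only [coe_R, _root_.sub_self, Submodule.coe_zero] using
    (S.tendsto_P x.2).const_sub (x : linf)

/-- The monoid `{I - P_m : m ∈ ℕ}` of operators on `X`. -/
noncomputable def monoidR : Submonoid (Xsub S →L[ℝ] Xsub S) where
  carrier := range S.R
  one_mem' := ⟨0, S.R_zero⟩
  mul_mem' := by
    rintro _ _ ⟨m, rfl⟩ ⟨n, rfl⟩
    exact ⟨max m n, (S.R_mul m n).symm⟩

/-- The functional `Q e_k^*` as an element of `X^*` with its weak* topology. -/
noncomputable def weakQe (k : ℕ) : WeakDual ℝ (Xsub S) := StrongDual.toWeakDual (Qe S k)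

theorem norm_weakQe_le (k : ℕ) : ‖WeakDual.toStrongDual (S.weakQe k)‖ ≤ 1 :=
  ContinuousLinearMap.opNorm_le_bound _ zero_le_one fun x => by
    rw [_root_.one_mul]
    exact lp.norm_apply_le_norm (E := fun _ : ℕ => ℝ) ENNReal.top_ne_zero (x : linf) k

/-- The tuples `⟨m, i, σ', σ''⟩` with `1 ≤ i ≤ d m`. -/
abbrev PieceIndex : Type := Σ m : ℕ, Icc 1 (S.d m) × ℤˣ × ℤˣ

/-- The centre `a σ' Q e_i^*` of a piece. -/
noncomputable def pieceCenter (q : S.PieceIndex) : WeakDual ℝ (Xsub S) :=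
  (S.a * ((q.2.2.1 : ℤ) : ℝ)) • S.weakQe q.2.1

/-- The factor `b σ''` of a piece. -/
noncomputable def pieceScale (q : S.PieceIndex) : ℝ := S.b * ((q.2.2.2 : ℤ) : ℝ)

theorem a_pos : 0 < S.a := S.hb.trans S.hba

theorem abs_pieceScale (q : S.PieceIndex) : |S.pieceScale q| = S.b := by
  rw [pieceScale, abs_mul, abs_of_pos S.hb, ← Int.cast_abs, Int.isUnit_iff_abs_eq.1 q.2.2.2.isUnit,
    Int.cast_one, _root_.mul_one]

theorem pieceCenter_mem (q : S.PieceIndex) :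
    S.pieceCenter q ∈ S.a • closure (range fun k : ℕ+ => S.weakQe k) ∪
      (-S.a) • closure (range fun k : ℕ+ => S.weakQe k) := by
  have hmem : S.weakQe q.2.1 ∈ closure (range fun k : ℕ+ => S.weakQe k) :=
    subset_closure ⟨⟨q.2.1, q.2.1.2.1⟩, rfl⟩
  rcases Int.units_eq_one_or q.2.2.1 with h | h
  · left
    simpa [pieceCenter, h] using smul_mem_smul_set (a := S.a) hmem
  · right
    simpa [pieceCenter, h] using smul_mem_smul_set (a := -S.a) hmem

theorem tendsto_R_piece (x : Xsub S) :
    Tendsto (fun q : S.PieceIndex => S.R q.1 x) cofinite (𝓝 0) := by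
  refine (Nat.cofinite_eq_atTop ▸ S.tendsto_R x).comp (Tendsto.cofinite_of_finite_preimage_singleton
    fun m => ?_)
  rw [← range_sigmaMk]
  exact finite_range _

theorem exists_weakQe_eq_add {n k : ℕ} (hn : 2 ≤ n) (hk : S.d n < k) (hkn : k ≤ S.d (n + 1)) :
    ∃ (q : S.PieceIndex) (j : ℕ+), S.weakQe k =
      S.pieceCenter q + S.pieceScale q • dualPrecomp (S.R q.1) (S.weakQe j) +
        dualPrecomp (S.R n) (S.weakQe k) := by
  obtain ⟨hσ', hσ'', -, -, hi, him, hj, -⟩ := (S.hφ n hn).mapsTo ⟨hk, hkn⟩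
  obtain ⟨σ', hσ'⟩ := Int.isUnit_iff.2 hσ'
  obtain ⟨σ'', hσ''⟩ := Int.isUnit_iff.2 hσ''
  refine ⟨⟨(S.φ k).2.2.1, ⟨(S.φ k).2.1, hi, him⟩, σ', σ''⟩, ⟨(S.φ k).2.2.2.2, hj⟩, ?_⟩
  refine ContinuousLinearMap.ext fun x => ?_
  have hx : (x : linf) k = S.P n x k + (S.R n x : linf) k := by
    rw [← coordFn_apply, ← coordFn_apply, ← coordFn_apply, ← map_add, coe_R, _root_.add_sub_cancel]
  change (x : linf) k = (S.a * ((σ' : ℤ) : ℝ)) * (x : linf) (S.φ k).2.1 +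
    (S.b * ((σ'' : ℤ) : ℝ)) * (S.R (S.φ k).2.2.1 x : linf) (S.φ k).2.2.2.2 + (S.R n x : linf) k
  rw [hx, S.P_apply hn hk hkn, hσ', hσ'']
  rfl

theorem accumulatesOn_weakQe : AccumulatesOn (fun k : ℕ+ => {S.weakQe k})
    ((S.a • closure (range fun k : ℕ+ => S.weakQe k) ∪
        (-S.a) • closure (range fun k : ℕ+ => S.weakQe k)) ∪
      ⋃ q, (fun f => S.pieceCenter q + S.pieceScale q • f) ''
        (dualPrecomp (S.R q.1) '' closure (range fun k : ℕ+ => S.weakQe k))) := by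
  intro U hU
  obtain ⟨N, hN⟩ := eventually_atTop.1 <| eventually_prod_principal_iff.1 <|
    (tendsto_dualPrecomp_prod_principal S.tendsto_R).eventually_mem hU
  have hlarge : ∀ᶠ k : ℕ+ in cofinite, S.d (N + 2) < k :=
    PNat.coe_injective.tendsto_cofinite.eventually
      (Nat.cofinite_eq_atTop ▸ eventually_gt_atTop (S.d (N + 2)))
  filter_upwards [hlarge] with k hk
  obtain ⟨n, hNn, hkn⟩ := S.exists_d_lt_le (Nat.le_add_left 1 (N + 1)) hk
  obtain ⟨q, j, hkq⟩ := S.exists_weakQe_eq_add (le_of_add_le_right hNn) hkn.1 hkn.2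
  rw [singleton_subset_iff, hkq]
  have hj : S.weakQe j ∈ closure (range fun k : ℕ+ => S.weakQe k) := subset_closure ⟨j, rfl⟩
  exact add_mem_add (.inr <| mem_iUnion.2 ⟨q, mem_image_of_mem _ (mem_image_of_mem _ hj)⟩)
    (hN n ((Nat.le_add_right N 2).trans hNn) _ (S.norm_weakQe_le k))

/-- The functionals `Q e_k^*` as a self-similar system: for `d n < k ≤ d (n + 1)` and
`φ k = (σ', i, m, σ'', j)`, the functional `Q e_k^*` differs by `Q e_k^* ∘ (I - P_n)` from the
element `a σ' Q e_i^* + b σ'' Q e_j^* ∘ (I - P_m)` of a piece. -/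
noncomputable def selfSimilarSystem : SelfSimilarSystem (Xsub S) S.PieceIndex ℕ+ where
  e k := S.weakQe k
  norm_e_le k := S.norm_weakQe_le k
  M := S.monoidR
  K := 1 + S.lam
  norm_le := by
    rintro _ ⟨m, rfl⟩
    exact S.norm_R_le m
  R q := S.R q.1
  R_mem q := mem_range_self q.1
  tendsto_R := S.tendsto_R_piece
  a := S.a
  a_pos := S.a_pos
  a_lt_one := S.ha
  s := S.pieceScale
  s_ne_zero q := abs_pos.1 (S.hb.trans_eq (S.abs_pieceScale q).symm)
  abs_s_le q := (S.abs_pieceScale q).trans_le S.hba.le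
  g := S.pieceCenter
  g_mem := S.pieceCenter_mem
  accumulatesOn := S.accumulatesOn_weakQe

theorem image_setOf_Qe : StrongDual.toWeakDual '' {f | ∃ k : ℕ, 1 ≤ k ∧ f = Qe S k} =
    range fun k : ℕ+ => S.weakQe k := by
  ext f
  constructor
  · rintro ⟨_, ⟨k, hk, rfl⟩, rfl⟩
    exact ⟨⟨k, hk⟩, rfl⟩
  · rintro ⟨k, rfl⟩
    exact ⟨_, ⟨k, k.2, rfl⟩, rfl⟩

end BDSetup

/-- Proposition 4.3: for every `ε > 0` the modified ε-Szlenk index of the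
weak*-closure `C` of `{Q e_k^*}` is finite. -/
theorem stmt_16 (S : BDSetup) (ε : ℝ) (hε : 0 < ε) :
    ∃ n : ℕ,
      PmodSet (Xsub S) ε
        (wstarCl {f : (Xsub S) →L[ℝ] ℝ | ∃ k : ℕ, 1 ≤ k ∧ f = Qe S k}) (n : Ordinal) = ∅ := by
  set A : Set ((Xsub S) →L[ℝ] ℝ) := {f | ∃ k : ℕ, 1 ≤ k ∧ f = Qe S k}
  obtain ⟨n, hn⟩ :=
    S.selfSimilarSystem.exists_clusterSet_iterate_eq_empty (r := ε / 4) (by positivity)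
  have hempty : StrongDual.toWeakDual '' PmodSet (Xsub S) ε (wstarCl A) n ⊆ ∅ := calc
    _ ⊆ (clusterSet (escape (Xsub S) (ε / 4)))^[n] (StrongDual.toWeakDual '' wstarCl A) :=
      image_PmodSet_subset (by linarith) _ n
    _ ⊆ (clusterSet (escape (Xsub S) (ε / 4)))^[n] (closure (StrongDual.toWeakDual '' A)) :=
      clusterSet_iterate_mono le_rfl (image_wstarCl_subset_closure A) n
    _ = ∅ := by rw [S.image_setOf_Qe]; exact hn
  exact ⟨n, image_eq_empty.1 (subset_empty_iff.1 hempty)⟩
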